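/- Assume (F0)-(F4), and for each ε > 0 let u_ε : [0,T] → X be a C² solution of ε² A ü_ε(t) + ε B u̇_ε(t) + ∇ₓF(t, u_ε(t)) = 0 on [0,T], with ‖u_ε(0)‖ ≤ R and ε‖u̇_ε(0)‖ ≤ R for all ε > 0. Then the functions t ↦ ε u̇_ε(t) converge to 0 in L²((0,T); X) as ε → 0; consequently, for every sequence ε_k → 0 there is a subsequence along which ε_k² ‖u̇_{ε_k}(t)‖² → 0 for almost every t ∈ [0,T]. -/

import Mathlib

open Set Filter Topology MeasureTheory
open scoped RealInnerProductSpace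


theorem aux_coercive {X : Type*} [NormedAddCommGroup X] [InnerProductSpace ℝ X]
    [FiniteDimensional ℝ X] (B : X →L[ℝ] X) (hBpos : ∀ x : X, x ≠ 0 → 0 < ⟪x, B x⟫) :
    ∃ b > (0 : ℝ), ∀ x : X, b * ‖x‖ ^ 2 ≤ ⟪x, B x⟫ := by
  rcases subsingleton_or_nontrivial X with h | h
  · refine ⟨1, one_pos, fun x => ?_⟩
    have : x = 0 := Subsingleton.elim _ _
    subst this
    simp
  · have : ProperSpace X := FiniteDimensional.proper ℝ X
    have hne : (Metric.sphere (0 : X) 1).Nonempty := NormedSpace.sphere_nonempty.mpr zero_le_one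
    have hc : Continuous fun x : X => ⟪x, B x⟫ := by fun_prop
    obtain ⟨y, hy, hmin⟩ := (isCompact_sphere (0 : X) 1).exists_isMinOn hne hc.continuousOn
    have hy1 : ‖y‖ = 1 := by simpa using hy
    refine ⟨⟪y, B y⟫, hBpos y (by rintro rfl; simp at hy1), fun x => ?_⟩
    by_cases hx : x = 0
    · subst hx; simp
    have hx' : 0 < ‖x‖ := norm_pos_iff.mpr hx
    have hmem : (‖x‖⁻¹ • x) ∈ Metric.sphere (0 : X) 1 := by
      simp [norm_smul, hx'.ne']
    have h2 : ⟪y, B y⟫ ≤ ⟪‖x‖⁻¹ • x, B (‖x‖⁻¹ • x)⟫ := hmin hmem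
    rw [map_smul, real_inner_smul_left, real_inner_smul_right] at h2
    calc ⟪y, B y⟫ * ‖x‖ ^ 2 ≤ (‖x‖⁻¹ * (‖x‖⁻¹ * ⟪x, B x⟫)) * ‖x‖ ^ 2 := by gcongr
      _ = ⟪x, B x⟫ := by field_simp

theorem aux_ae (T : ℝ) (hT : 0 < T) (f : ℕ → ℝ → ℝ) (hf0 : ∀ k t, 0 ≤ f k t)
    (hfc : ∀ k, ContinuousOn (f k) (Set.Icc 0 T))
    (h : Tendsto (fun k => ∫ t in (0 : ℝ)..T, f k t) atTop (𝓝 0)) :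
    ∃ φ : ℕ → ℕ, StrictMono φ ∧ ∀ᵐ t ∂(volume.restrict (Set.Icc (0 : ℝ) T)),
      Tendsto (fun k => f (φ k) t) atTop (𝓝 0) := by
  have hm : ∀ k, AEStronglyMeasurable (f k) (volume.restrict (Set.Icc (0 : ℝ) T)) :=
    fun k => (hfc k).aestronglyMeasurable measurableSet_Icc
  have hi : ∀ k, Integrable (f k) (volume.restrict (Set.Icc (0 : ℝ) T)) :=
    fun k => (hfc k).integrableOn_Icc
  have hL : Tendsto (fun k => eLpNorm (f k - (0 : ℝ → ℝ)) 1 (volume.restrict (Set.Icc (0 : ℝ) T)))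
      atTop (𝓝 0) := by
    have he : ∀ k, eLpNorm (f k - (0 : ℝ → ℝ)) 1 (volume.restrict (Set.Icc (0 : ℝ) T))
        = ENNReal.ofReal (∫ t in (0 : ℝ)..T, f k t) := by
      intro k
      rw [sub_zero, eLpNorm_one_eq_lintegral_enorm, ← ofReal_integral_norm_eq_lintegral_enorm (hi k),
        intervalIntegral.integral_of_le hT.le, ← integral_Icc_eq_integral_Ioc]
      congr 2
      ext t
      rw [Real.norm_of_nonneg (hf0 k t)]
    simp_rw [he]
    simpa using ENNReal.tendsto_ofReal h
  have hM := tendstoInMeasure_of_tendsto_eLpNorm one_ne_zero hm aestronglyMeasurable_zero hL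
  obtain ⟨φ, h1, h2⟩ := hM.exists_seq_tendsto_ae
  exact ⟨φ, h1, h2⟩

/-- The functions `t ↦ ε u̇_ε(t)` converge to `0` in `L²((0,T);X)` as `ε → 0`; consequently,
along a subsequence of any sequence `ε_k → 0`, `ε_k² ‖u̇_{ε_k}(t)‖² → 0` for a.e. `t ∈ [0,T]`. -/
theorem eps_velocity_to_zero
    {X : Type*} [NormedAddCommGroup X] [InnerProductSpace ℝ X] [FiniteDimensional ℝ X]
    (A B : X →L[ℝ] X)
    (hAsymm : ∀ x y : X, ⟪A x, y⟫ = ⟪x, A y⟫)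
    (hApos : ∀ x : X, x ≠ 0 → 0 < ⟪x, A x⟫)
    (hBsymm : ∀ x y : X, ⟪B x, y⟫ = ⟪x, B y⟫)
    (hBpos : ∀ x : X, x ≠ 0 → 0 < ⟪x, B x⟫)
    (T : ℝ) (hT : 0 < T)
    (F dtF : ℝ → X → ℝ) (gradF : ℝ → X → X)
    -- (F0)
    (hF0 : ContDiffOn ℝ 1 (fun p : ℝ × X => F p.1 p.2) (Set.Icc 0 T ×ˢ Set.univ))
    (hgradF : ∀ t ∈ Set.Icc 0 T, ∀ x : X, HasGradientAt (F t) (gradF t x) x)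
    (hdtF : ∀ x : X, ∀ t ∈ Set.Icc 0 T,
      HasDerivWithinAt (fun τ => F τ x) (dtF t x) (Set.Icc 0 T) t)
    -- (F1)
    (hF1 : ∀ ρ > (0 : ℝ), Bornology.IsBounded {x : X | ∀ t ∈ Set.Icc 0 T, |F t x| ≤ ρ})
    -- (F2)
    (C₁ C₂ : ℝ) (hC₁ : 0 < C₁) (hC₂ : 0 < C₂)
    (hF2 : ∀ t ∈ Set.Icc 0 T, ∀ x : X, |dtF t x| ≤ C₁ * F t x + C₂)
    -- (F3)
    (dtgradF : ℝ → X → X)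
    (hdtgradF : ∀ x : X, ∀ t ∈ Set.Icc 0 T,
      HasDerivWithinAt (fun τ => gradF τ x) (dtgradF t x) (Set.Icc 0 T) t)
    (hF3 : ∀ M > (0 : ℝ), ∃ a : ℝ → ℝ, MeasureTheory.IntegrableOn a (Set.Icc 0 T) ∧
      ∀ t ∈ Set.Icc 0 T, ∀ x : X, ‖x‖ ≤ M → ‖dtgradF t x‖ ≤ a t)
    -- (F4)
    (hessF : ℝ → X → X →L[ℝ] X)
    (hF4 : ∀ t ∈ Set.Icc 0 T, ContDiff ℝ 2 (F t))
    (hhessF : ∀ t ∈ Set.Icc 0 T, ∀ x : X, HasFDerivAt (gradF t) (hessF t x) x)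
    (hhessFc : ContinuousOn (fun p : ℝ × X => hessF p.1 p.2) (Set.Icc 0 T ×ˢ Set.univ))
    -- the family of solutions u_ε, with derivatives u'_ε, u''_ε
    (u u' u'' : ℝ → ℝ → X)
    (hu' : ∀ ε > (0 : ℝ), ∀ t ∈ Set.Icc 0 T, HasDerivWithinAt (u ε) (u' ε t) (Set.Icc 0 T) t)
    (hu'' : ∀ ε > (0 : ℝ), ∀ t ∈ Set.Icc 0 T, HasDerivWithinAt (u' ε) (u'' ε t) (Set.Icc 0 T) t)
    (hu''c : ∀ ε > (0 : ℝ), ContinuousOn (u'' ε) (Set.Icc 0 T))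
    (hode : ∀ ε > (0 : ℝ), ∀ t ∈ Set.Icc 0 T,
      ε ^ 2 • A (u'' ε t) + ε • B (u' ε t) + gradF t (u ε t) = 0)
    -- uniformly bounded initial data
    (R : ℝ) (hR : 0 < R)
    (hinit : ∀ ε > (0 : ℝ), ‖u ε 0‖ ≤ R ∧ ε * ‖u' ε 0‖ ≤ R) :
    -- ε u̇_ε → 0 in L²((0,T);X)
    Filter.Tendsto (fun ε : ℝ => ∫ t in (0 : ℝ)..T, ‖ε • u' ε t‖ ^ 2) (𝓝[>] 0) (𝓝 0) ∧
    -- a.e. convergence along a subsequence of any vanishing sequence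
    ∀ εs : ℕ → ℝ, (∀ k, 0 < εs k) → Filter.Tendsto εs Filter.atTop (𝓝 0) →
      ∃ φ : ℕ → ℕ, StrictMono φ ∧
        ∀ᵐ t ∂(MeasureTheory.volume.restrict (Set.Icc (0 : ℝ) T)),
          Filter.Tendsto (fun k => (εs (φ k)) ^ 2 * ‖u' (εs (φ k)) t‖ ^ 2)
            Filter.atTop (𝓝 0) := by
  obtain ⟨b, hb, hB⟩ := aux_coercive B hBpos
  have hA0 : ∀ x : X, 0 ≤ ⟪x, A x⟫ := fun x => by
    by_cases hx : x = 0
    · subst hx; simp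
    · exact (hApos x hx).le
  have : ProperSpace X := FiniteDimensional.proper ℝ X
  have h0T : (0 : ℝ) ∈ Set.Icc 0 T := ⟨le_rfl, hT.le⟩
  have hTT : T ∈ Set.Icc 0 T := ⟨hT.le, le_rfl⟩
  have hFc0 : Continuous (F 0) := (hF4 0 h0T).continuous
  obtain ⟨K, hK⟩ := (isCompact_closedBall (0 : X) R).bddAbove_image hFc0.continuousOn
  have hKb : ∀ x : X, ‖x‖ ≤ R → F 0 x ≤ K := fun x hx =>
    hK (Set.mem_image_of_mem _ (by simpa using hx))
  have hFlow : ∀ t ∈ Set.Icc 0 T, ∀ x : X, 0 ≤ F t x + C₂ / C₁ := by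
    intro t ht x
    have h1 := (abs_nonneg _).trans (hF2 t ht x)
    have h2 : C₁ * (F t x + C₂ / C₁) = C₁ * F t x + C₂ := by field_simp
    rw [← h2] at h1
    exact nonneg_of_mul_nonneg_right h1 hC₁
  have huc : ∀ ε > (0 : ℝ), ContinuousOn (u ε) (Set.Icc 0 T) := fun ε he t ht =>
    (hu' ε he t ht).continuousWithinAt
  have hu'c : ∀ ε > (0 : ℝ), ContinuousOn (u' ε) (Set.Icc 0 T) := fun ε he t ht =>
    (hu'' ε he t ht).continuousWithinAt
  have hmain : ∀ ε > (0 : ℝ), Real.exp (-C₁ * T) * b * ∫ t in (0 : ℝ)..T, ‖ε • u' ε t‖ ^ 2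
      ≤ ε * (‖A‖ * R ^ 2 / 2 + K + C₂ / C₁) := by
    intro ε he
    let H : ℝ → ℝ := fun t => Real.exp (-C₁ * t) *
      (ε ^ 2 / 2 * ⟪u' ε t, A (u' ε t)⟫ + F t (u ε t) + C₂ / C₁)
    let H' : ℝ → ℝ := fun t => Real.exp (-C₁ * t) * (-C₁) *
      (ε ^ 2 / 2 * ⟪u' ε t, A (u' ε t)⟫ + F t (u ε t) + C₂ / C₁) +
      Real.exp (-C₁ * t) * (ε ^ 2 * ⟪u' ε t, A (u'' ε t)⟫ +
        (dtF t (u ε t) + ⟪gradF t (u ε t), u' ε t⟫))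
    have hHc : ContinuousOn H (Set.Icc 0 T) := by
      have h1 : ContinuousOn (fun t => F t (u ε t)) (Set.Icc 0 T) :=
        hF0.continuousOn.comp (f := fun t => (t, u ε t)) (continuousOn_id.prodMk (huc ε he))
          (fun t ht => ⟨ht, Set.mem_univ _⟩)
      have h2 : ContinuousOn (fun t => ⟪u' ε t, A (u' ε t)⟫) (Set.Icc 0 T) :=
        (hu'c ε he).inner (𝕜 := ℝ) (A.continuous.comp_continuousOn (hu'c ε he))
      have h3 : ContinuousOn (fun t : ℝ => Real.exp (-C₁ * t)) (Set.Icc 0 T) := by fun_prop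
      exact h3.mul (((continuousOn_const.mul h2).add h1).add continuousOn_const)
    have hHd : ∀ t ∈ Set.Ioo 0 T, HasDerivAt H (H' t) t := by
      intro t ht
      have htI : t ∈ Set.Icc 0 T := Set.Ioo_subset_Icc_self ht
      have hn : Set.Icc 0 T ∈ 𝓝 t := Icc_mem_nhds ht.1 ht.2
      have d1 : HasDerivAt (u ε) (u' ε t) t := (hu' ε he t htI).hasDerivAt hn
      have d2 : HasDerivAt (u' ε) (u'' ε t) t := (hu'' ε he t htI).hasDerivAt hn
      have dF : HasDerivAt (fun τ => F τ (u ε τ)) (dtF t (u ε t) + ⟪gradF t (u ε t), u' ε t⟫) t := by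
        have hn2 : Set.Icc 0 T ×ˢ (Set.univ : Set X) ∈ 𝓝 (t, u ε t) :=
          prod_mem_nhds hn univ_mem
        have hd : DifferentiableAt ℝ (fun p : ℝ × X => F p.1 p.2) (t, u ε t) :=
          (hF0.contDiffAt hn2).differentiableAt one_ne_zero
        have hL := hd.hasFDerivAt
        set L := fderiv ℝ (fun p : ℝ × X => F p.1 p.2) (t, u ε t) with hLdef
        have e1 : L (1, 0) = dtF t (u ε t) := by
          have q : HasDerivAt (fun τ : ℝ => (τ, u ε t)) ((1 : ℝ), (0 : X)) t :=
            (hasDerivAt_id t).prodMk (hasDerivAt_const t _)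
          have q1 : HasDerivAt (fun τ => F τ (u ε t)) (L (1, 0)) t :=
            HasFDerivAt.comp_hasDerivAt (l := fun p : ℝ × X => F p.1 p.2) t hL q
          exact q1.unique ((hdtF _ t htI).hasDerivAt hn)
        have e2 : L (0, u' ε t) = ⟪gradF t (u ε t), u' ε t⟫ := by
          have q : HasFDerivAt (fun x : X => (t, x)) (ContinuousLinearMap.inr ℝ ℝ X) (u ε t) :=
            hasFDerivAt_prodMk_right t _
          have q1 : HasFDerivAt (F t) (L.comp (ContinuousLinearMap.inr ℝ ℝ X)) (u ε t) :=
            HasFDerivAt.comp (g := fun p : ℝ × X => F p.1 p.2) (u ε t) hL q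
          have q2 := q1.unique (hgradF t htI (u ε t)).hasFDerivAt
          have q3 := congrArg (fun M => M (u' ε t)) q2
          simpa using q3
        have q : HasDerivAt (fun τ : ℝ => (τ, u ε τ)) ((1 : ℝ), u' ε t) t :=
          (hasDerivAt_id t).prodMk d1
        have q1 : HasDerivAt (fun τ => F τ (u ε τ)) (L (1, u' ε t)) t :=
            HasFDerivAt.comp_hasDerivAt (l := fun p : ℝ × X => F p.1 p.2) t hL q
        have e3 : L (1, u' ε t) = dtF t (u ε t) + ⟪gradF t (u ε t), u' ε t⟫ := by
          rw [← e1, ← e2, ← map_add]; simp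
        rwa [e3] at q1
      have dA : HasDerivAt (fun τ => A (u' ε τ)) (A (u'' ε t)) t :=
        A.hasFDerivAt.comp_hasDerivAt t d2
      have dI := d2.inner ℝ dA
      have dE : HasDerivAt (fun τ : ℝ => Real.exp (-C₁ * τ)) (Real.exp (-C₁ * t) * (-C₁)) t := by
        simpa using ((hasDerivAt_id t).const_mul (-C₁)).exp
      have := dE.mul (((dI.const_mul (ε ^ 2 / 2)).add dF).add_const (C₂ / C₁))
      have hs : ⟪u'' ε t, A (u' ε t)⟫ = ⟪u' ε t, A (u'' ε t)⟫ := by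
        rw [← hAsymm, real_inner_comm]
      rw [hs] at this
      refine HasDerivAt.congr_deriv (f := H) this ?_
      simp only [H', Pi.add_apply]
      ring
    have hle : ∀ t ∈ Set.Ioo 0 T, Real.exp (-C₁ * T) * b * ε * ‖u' ε t‖ ^ 2 ≤ - H' t := by
      intro t ht
      have htI : t ∈ Set.Icc 0 T := Set.Ioo_subset_Icc_self ht
      have o := congrArg (fun z => ⟪u' ε t, z⟫) (hode ε he t htI)
      simp only [inner_add_right, real_inner_smul_right, inner_zero_right] at o
      rw [real_inner_comm (gradF t (u ε t)) (u' ε t)] at o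
      have hf := (le_abs_self _).trans (hF2 t htI (u ε t))
      have hmono : Real.exp (-C₁ * T) ≤ Real.exp (-C₁ * t) :=
        Real.exp_le_exp.mpr (by nlinarith [ht.2])
      have hbb := hB (u' ε t)
      have e2 : H' t = - (Real.exp (-C₁ * t) * (ε * ⟪u' ε t, B (u' ε t)⟫ +
          C₁ * (ε ^ 2 / 2 * ⟪u' ε t, A (u' ε t)⟫) + (C₁ * F t (u ε t) + C₂ - dtF t (u ε t)))) := by
        have o2 : ε ^ 2 * ⟪u' ε t, A (u'' ε t)⟫ = - (ε * ⟪u' ε t, B (u' ε t)⟫) -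
          ⟪gradF t (u ε t), u' ε t⟫ := by
          have := real_inner_comm (gradF t (u ε t)) (u' ε t)
          linarith
        simp only [H', o2]
        field_simp
        ring
      rw [e2, neg_neg]
      have hAp := hA0 (u' ε t)
      calc Real.exp (-C₁ * T) * b * ε * ‖u' ε t‖ ^ 2
          = Real.exp (-C₁ * T) * (ε * (b * ‖u' ε t‖ ^ 2)) := by ring
        _ ≤ Real.exp (-C₁ * t) * (ε * ⟪u' ε t, B (u' ε t)⟫) := by gcongr
        _ ≤ _ := by
          gcongr
          have : 0 ≤ C₁ * (ε ^ 2 / 2 * ⟪u' ε t, A (u' ε t)⟫) := by positivity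
          linarith
    have hint : IntegrableOn (fun t => Real.exp (-C₁ * T) * b * ε * ‖u' ε t‖ ^ 2)
        (Set.Icc 0 T) :=
      (continuousOn_const.mul ((hu'c ε he).norm.pow 2)).integrableOn_Icc
    have hI := intervalIntegral.integral_le_sub_of_hasDeriv_right_of_le (g := fun t => - H t)
      (g' := fun t => - H' t) hT.le hHc.neg
      (fun t ht => (hHd t ht).neg.hasDerivWithinAt) hint hle
    rw [intervalIntegral.integral_const_mul] at hI
    have hHT : 0 ≤ H T := by
      have h1 := hFlow T hTT (u ε T)
      have h2 : 0 ≤ ε ^ 2 / 2 * ⟪u' ε T, A (u' ε T)⟫ := mul_nonneg (by positivity) (hA0 _)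
      exact mul_nonneg (Real.exp_pos _).le (by linarith)
    have hH0 : H 0 ≤ ‖A‖ * R ^ 2 / 2 + K + C₂ / C₁ := by
      have h1 := hKb _ (hinit ε he).1
      have h2 : ⟪u' ε 0, A (u' ε 0)⟫ ≤ ‖u' ε 0‖ * (‖A‖ * ‖u' ε 0‖) :=
        (real_inner_le_norm _ _).trans (by gcongr; exact A.le_opNorm _)
      have h3 : (ε * ‖u' ε 0‖) ^ 2 ≤ R ^ 2 := by
        have := (hinit ε he).2
        gcongr
      have h4 : ε ^ 2 / 2 * ⟪u' ε 0, A (u' ε 0)⟫ ≤ ‖A‖ * R ^ 2 / 2 := by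
        calc ε ^ 2 / 2 * ⟪u' ε 0, A (u' ε 0)⟫ ≤ ε ^ 2 / 2 * (‖u' ε 0‖ * (‖A‖ * ‖u' ε 0‖)) := by gcongr
          _ = ‖A‖ * (ε * ‖u' ε 0‖) ^ 2 / 2 := by ring
          _ ≤ _ := by gcongr
      simp only [H, mul_zero, Real.exp_zero, one_mul]
      linarith
    have hre : ∫ t in (0 : ℝ)..T, ‖ε • u' ε t‖ ^ 2 = ε ^ 2 * ∫ t in (0 : ℝ)..T, ‖u' ε t‖ ^ 2 := by
      rw [← intervalIntegral.integral_const_mul]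
      congr 1
      ext t
      rw [norm_smul, mul_pow, Real.norm_of_nonneg he.le]
    rw [hre]
    have hfin : Real.exp (-C₁ * T) * b * ε * ∫ t in (0 : ℝ)..T, ‖u' ε t‖ ^ 2
        ≤ ‖A‖ * R ^ 2 / 2 + K + C₂ / C₁ := by linarith
    have := mul_le_mul_of_nonneg_left hfin he.le
    linarith
  have hlim : Filter.Tendsto (fun ε : ℝ => ∫ t in (0 : ℝ)..T, ‖ε • u' ε t‖ ^ 2) (𝓝[>] 0) (𝓝 0) := by
    have hc : 0 < Real.exp (-C₁ * T) * b := by positivity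
    have hg : Tendsto (fun ε : ℝ => ε * (‖A‖ * R ^ 2 / 2 + K + C₂ / C₁) / (Real.exp (-C₁ * T) * b))
        (𝓝[>] 0) (𝓝 0) := by
      have : Continuous (fun ε : ℝ => ε * (‖A‖ * R ^ 2 / 2 + K + C₂ / C₁) /
        (Real.exp (-C₁ * T) * b)) := by fun_prop
      have h := this.tendsto 0
      simp only [zero_mul, zero_div] at h
      exact h.mono_left nhdsWithin_le_nhds
    refine tendsto_of_tendsto_of_tendsto_of_le_of_le' tendsto_const_nhds hg ?_ ?_
    · exact Eventually.of_forall fun ε =>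
        intervalIntegral.integral_nonneg hT.le (fun t _ => by positivity)
    · filter_upwards [self_mem_nhdsWithin] with ε he
      rw [le_div_iff₀ hc, mul_comm]
      exact hmain ε he
  refine ⟨hlim, fun εs hpos hεs => ?_⟩
  have ht : Tendsto εs atTop (𝓝[>] 0) :=
    tendsto_nhdsWithin_iff.mpr ⟨hεs, Eventually.of_forall hpos⟩
  obtain ⟨φ, h1, h2⟩ := aux_ae T hT (fun k t => ‖εs k • u' (εs k) t‖ ^ 2)
    (fun k t => by positivity)
    (fun k => ((hu'c _ (hpos k)).const_smul (εs k)).norm.pow 2) (hlim.comp ht)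
  refine ⟨φ, h1, ?_⟩
  filter_upwards [h2] with t h
  refine h.congr fun k => ?_
  rw [norm_smul, mul_pow, Real.norm_of_nonneg (hpos _).le]
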